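/- arXiv:1808.00780 — 2 statements merged into one kernel-verified Lean document; each statement's English description precedes it below -/
import Mathlib

section
/- Let m ≥ 1, let V₁ and V₂ be open subsets of ℂ^m, and let φ : V₁ → V₂ be a bijective holomorphic map whose inverse is also holomorphic (a biholomorphism). Then for every point x ∈ V₁ there exists a real number R > 0 such that for every r with 0 < r < R, the open Euclidean ball B(x, r) is contained in V₁ and its image φ(B(x, r)) is a convex subset of ℂ^m (where ℂ^m is regarded as the real vector space ℝ^{2m}). -/
/-!
In the target, `φ '' B(x, r)` is the set of points `y` near `φ x` with `‖ψ y - x‖ < r`, so convexity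
says that the sublevel sets of `‖ψ · - x‖` are convex. For a holomorphic map the Schwarz lemma with
a vanishing linear part gives the second-order Taylor bound (`exists_taylor_bound`), hence `ψ` fails
to be affine on a segment `[y, z]` only by an error `K s t ‖y - z‖²` at `s • y + t • z`. On the other
hand, the squared norm is uniformly convex: with `u = ψ y - x` and `v = ψ z - x`,
`‖s u + t v‖² = s ‖u‖² + t ‖v‖² - s t ‖u - v‖²`. Since `φ` is Lipschitz near `x`, `‖y - z‖` is
bounded by a multiple of `‖u - v‖`, and for small `r` the gain beats the error
(`norm_add_lt_of_error`).
-/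

open Metric Set Filter Topology

/-- Local first- and second-order estimates for a holomorphic map, both from the Schwarz lemma. -/
lemma exists_taylor_bound {E F : Type*} [NormedAddCommGroup E] [NormedSpace ℂ E]
    [NormedAddCommGroup F] [NormedSpace ℂ F] {f : E → F} {V : Set E} {c : E}
    (hV : IsOpen V) (hc : c ∈ V) (hf : DifferentiableOn ℂ f V) :
    ∃ δ > 0, ∃ K ≥ 0, ball c δ ⊆ V ∧ ∀ p ∈ ball c δ, ∀ w ∈ ball c δ,
      ‖f w - f p‖ ≤ K * ‖w - p‖ ∧
      ‖f w - f p - fderiv ℂ f p (w - p)‖ ≤ K * ‖w - p‖ ^ 2 := by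
  have hcont : ContinuousAt f c := hf.continuousOn.continuousAt (hV.mem_nhds hc)
  obtain ⟨ε, hε, hball⟩ := Metric.mem_nhds_iff.1
    (inter_mem (hV.mem_nhds hc) (hcont (ball_mem_nhds (f c) one_pos)))
  obtain ⟨ρ, rfl⟩ : ∃ ρ, ε = 2 * ρ := ⟨ε / 2, by ring⟩
  have hρ : 0 < ρ := by linarith
  refine ⟨ρ / 2, by positivity, 2 / ρ + 4 / ρ ^ 2, by positivity,
    fun y hy => (hball (ball_subset_ball (by linarith) hy)).1, fun p hp w hw => ?_⟩
  have hsub : ball p ρ ⊆ ball c (2 * ρ) :=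
    ball_subset_ball' (by have := mem_ball.1 hp; linarith)
  have hd : DifferentiableOn ℂ f (ball p ρ) := hf.mono fun y hy => (hball (hsub hy)).1
  have hmaps : MapsTo f (ball p ρ) (closedBall (f p) 2) := fun y hy => by
    have h1 : dist (f y) (f c) < 1 := (hball (hsub hy)).2
    have h2 : dist (f p) (f c) < 1 := (hball (hsub (mem_ball_self hρ))).2
    have := dist_triangle_right (f y) (f p) (f c)
    rw [mem_closedBall]; linarith
  have hwp : w ∈ ball p ρ := by
    have := dist_triangle_right w p c
    rw [mem_ball] at *; linarith
  have hdp : DifferentiableAt ℂ f p := hd.differentiableAt (ball_mem_nhds p hρ)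
  have hL : ‖fderiv ℂ f p‖ ≤ 2 / ρ := Complex.norm_fderiv_le_div_of_mapsTo_ball hd hmaps hρ
  have h4 : 0 ≤ 4 / ρ ^ 2 := by positivity
  have h2 : 0 ≤ 2 / ρ := by positivity
  constructor
  · have := Complex.dist_le_div_mul_dist_of_mapsTo_ball hd hmaps hwp
    rw [dist_eq_norm, dist_eq_norm] at this
    nlinarith [norm_nonneg (w - p)]
  · -- Subtracting the linear part makes the Schwarz lemma gain one more order.
    have hmaps' : MapsTo (fun y => f y - fderiv ℂ f p (y - p)) (ball p ρ)
        (closedBall (f p - fderiv ℂ f p (p - p)) 4) := fun y hy => by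
      have h1 := hmaps hy
      have h3 : ‖fderiv ℂ f p (y - p)‖ ≤ 2 / ρ * ρ :=
        (ContinuousLinearMap.le_opNorm _ _).trans
          (mul_le_mul hL (mem_ball_iff_norm.1 hy).le (norm_nonneg _) h2)
      rw [div_mul_cancel₀ _ hρ.ne'] at h3
      rw [mem_closedBall_iff_norm] at *
      have h5 : f y - fderiv ℂ f p (y - p) - (f p - fderiv ℂ f p (p - p))
        = (f y - f p) - fderiv ℂ f p (y - p) := by simp; abel
      rw [h5]
      linarith [norm_sub_le (f y - f p) (fderiv ℂ f p (y - p))]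
    have key := Complex.dist_le_mul_div_pow_of_mapsTo_ball_of_isLittleO (n := 1)
      (f := fun y => f y - fderiv ℂ f p (y - p)) (c := p) (z := w) (R₁ := ρ) (R₂ := 4)
      (hd.sub (by fun_prop)) hmaps'
      (by
        have := hdp.hasFDerivAt.isLittleO
        simp only [pow_one]
        refine (this.norm_right).congr_left fun y => ?_
        simp; abel) hwp
    rw [dist_eq_norm, dist_eq_norm] at key
    have h5 : f w - fderiv ℂ f p (w - p) - (f p - fderiv ℂ f p (p - p))
        = f w - f p - fderiv ℂ f p (w - p) := by simp; abel
    rw [h5] at key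
    have h6 : 4 * (‖w - p‖ / ρ) ^ (1 + 1) = 4 / ρ ^ 2 * ‖w - p‖ ^ 2 := by
      rw [div_pow]; ring
    rw [h6] at key
    nlinarith [sq_nonneg ‖w - p‖]

/-- A second-order error at a point of a segment does not leave a ball of small radius. -/
lemma norm_add_lt_of_error {E : Type*} [NormedAddCommGroup E] [InnerProductSpace ℂ E]
    {u v e : E} {r A s t : ℝ} (hr : 0 < r) (hA : 0 ≤ A) (hAr : 2 * A * r ≤ 1)
    (hs : 0 ≤ s) (ht : 0 ≤ t) (hst : s + t = 1) (hu : ‖u‖ < r) (hv : ‖v‖ < r)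
    (he : ‖e‖ ≤ A * (s * t * ‖u - v‖ ^ 2)) :
    ‖s • u + t • v + e‖ < r := by
  have hid : ‖s • u + t • v‖ ^ 2 = s * ‖u‖ ^ 2 + t * ‖v‖ ^ 2 - s * t * ‖u - v‖ ^ 2 := by
    let _ : InnerProductSpace ℝ E := InnerProductSpace.complexToReal
    rw [norm_add_sq_real, norm_sub_sq_real, norm_smul, norm_smul, real_inner_smul_left,
      real_inner_smul_right, Real.norm_of_nonneg hs, Real.norm_of_nonneg ht]
    obtain rfl : t = 1 - s := by linarith
    ring
  set q := s * t * ‖u - v‖ ^ 2 with hq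
  have hst4 : s * t ≤ 1 / 4 := by nlinarith [sq_nonneg (s - t)]
  have hD : ‖u - v‖ ^ 2 ≤ 4 * r ^ 2 := by
    have := norm_sub_le u v
    nlinarith [norm_nonneg (u - v)]
  have hst0 : 0 ≤ s * t := mul_nonneg hs ht
  have hq0 : 0 ≤ q := by positivity
  have hqr : q ≤ r ^ 2 := by nlinarith [sq_nonneg ‖u - v‖]
  have hu2 : ‖u‖ ^ 2 < r ^ 2 := by nlinarith [norm_nonneg u]
  have hv2 : ‖v‖ ^ 2 < r ^ 2 := by nlinarith [norm_nonneg v]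
  have hlt : s * ‖u‖ ^ 2 + t * ‖v‖ ^ 2 < r ^ 2 := by
    obtain rfl : t = 1 - s := by linarith
    rcases hs.eq_or_lt with rfl | hs'
    · simpa using hv2
    · nlinarith
  have hAq : A * q ≤ r / 2 := by nlinarith
  have hsq : ‖s • u + t • v‖ ^ 2 < (r - A * q) ^ 2 := by nlinarith [sq_nonneg (A * q)]
  have := lt_of_pow_lt_pow_left₀ 2 (by linarith) hsq
  linarith [norm_add_le (s • u + t • v) e]

/-- Let `m ≥ 1`, `V₁ V₂ ⊆ ℂ^m` open, `φ : V₁ → V₂` a biholomorphism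
(bijective holomorphic with holomorphic inverse `ψ`).  Then for every `x ∈ V₁` there is
`R > 0` such that for all `0 < r < R` the ball `B(x,r)` is contained in `V₁` and
`φ '' B(x,r)` is a (real) convex subset of `ℂ^m`. -/
theorem stmt0 (m : ℕ) (hm : 1 ≤ m)
    (V₁ V₂ : Set (EuclideanSpace ℂ (Fin m)))
    (hV₁ : IsOpen V₁) (hV₂ : IsOpen V₂)
    (φ ψ : EuclideanSpace ℂ (Fin m) → EuclideanSpace ℂ (Fin m))
    (hφ : DifferentiableOn ℂ φ V₁)
    (hψ : DifferentiableOn ℂ ψ V₂)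
    (hbij : Set.BijOn φ V₁ V₂)
    (hinv : ∀ x ∈ V₁, ψ (φ x) = x)
    (hinv' : ∀ y ∈ V₂, φ (ψ y) = y) :
    ∀ x ∈ V₁, ∃ R : ℝ, 0 < R ∧ ∀ r : ℝ, 0 < r → r < R →
      Metric.ball x r ⊆ V₁ ∧ Convex ℝ (φ '' Metric.ball x r) := by
  intro x hx
  obtain ⟨δ, hδ, K, hK, hsub, hT⟩ := exists_taylor_bound hV₂ (hbij.mapsTo hx) hψ
  obtain ⟨δ', hδ', L, hL, hsub', hLip⟩ := exists_taylor_bound hV₁ hx hφ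
  have hcont : ContinuousAt φ x := hφ.continuousOn.continuousAt (hV₁.mem_nhds hx)
  obtain ⟨η, hη, hball⟩ := Metric.mem_nhds_iff.1 (hcont (ball_mem_nhds (φ x) hδ))
  have hA : 0 ≤ K * L ^ 2 := by positivity
  refine ⟨min (min δ' η) (1 / (2 * (K * L ^ 2) + 1)), by positivity, fun r hr hrR => ?_⟩
  obtain ⟨⟨h1, h2⟩, h3⟩ : (r < δ' ∧ r < η) ∧ r < 1 / (2 * (K * L ^ 2) + 1) := by
    simpa only [lt_min_iff] using hrR
  have hAr : 2 * (K * L ^ 2) * r ≤ 1 := by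
    rw [lt_div_iff₀ (by positivity)] at h3
    nlinarith
  have hrV : ball x r ⊆ V₁ := (ball_subset_ball h1.le).trans hsub'
  refine ⟨hrV, ?_⟩
  rintro _ ⟨a, ha, rfl⟩ _ ⟨b, hb, rfl⟩ s t hs ht hst
  have hya : φ a ∈ ball (φ x) δ := hball (ball_subset_ball h2.le ha)
  have hyb : φ b ∈ ball (φ x) δ := hball (ball_subset_ball h2.le hb)
  set p := s • φ a + t • φ b with hp
  have hpδ : p ∈ ball (φ x) δ := convex_ball _ _ hya hyb hs ht hst
  refine ⟨ψ p, ?_, hinv' p (hsub hpδ)⟩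
  have hTa := (hT p hpδ _ hya).2
  have hTb := (hT p hpδ _ hyb).2
  rw [hinv a (hrV ha)] at hTa
  rw [hinv b (hrV hb)] at hTb
  have hpa : φ a - p = t • (φ a - φ b) := by
    obtain rfl : s = 1 - t := by linarith
    rw [hp]; module
  have hpb : φ b - p = (-s) • (φ a - φ b) := by
    obtain rfl : t = 1 - s := by linarith
    rw [hp]; module
  have hd : ‖φ a - φ b‖ ≤ L * ‖a - b‖ :=
    (hLip b (ball_subset_ball h1.le hb) a (ball_subset_ball h1.le ha)).1
  have hd2 : ‖φ a - φ b‖ ^ 2 ≤ L ^ 2 * ‖a - b‖ ^ 2 := by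
    rw [← mul_pow]; gcongr
  -- The linear parts of the two expansions around `p` cancel in the convex combination.
  have hlin : s • fderiv ℂ ψ p (φ a - p) + t • fderiv ℂ ψ p (φ b - p) = 0 := by
    have h0 : ∀ (k : ℝ) (w : EuclideanSpace ℂ (Fin m)),
        fderiv ℂ ψ p (k • w) = k • fderiv ℂ ψ p w := fun k w =>
      (fderiv ℂ ψ p).map_smul_of_tower k w
    rw [hpa, hpb, h0, h0]; module
  have herr : ‖ψ p - (s • a + t • b)‖ ≤ K * (s * t * ‖φ a - φ b‖ ^ 2) := by
    have h0 : ψ p - (s • a + t • b) = -(s • (a - ψ p - fderiv ℂ ψ p (φ a - p))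
        + t • (b - ψ p - fderiv ℂ ψ p (φ b - p))) := by
      have h5 : s • (a - ψ p - fderiv ℂ ψ p (φ a - p)) + t • (b - ψ p - fderiv ℂ ψ p (φ b - p))
          = s • a + t • b - (s + t) • ψ p
            - (s • fderiv ℂ ψ p (φ a - p) + t • fderiv ℂ ψ p (φ b - p)) := by module
      rw [h5, hlin, hst]; module
    rw [h0, norm_neg]
    refine (norm_add_le _ _).trans ?_
    rw [norm_smul, norm_smul, Real.norm_of_nonneg hs, Real.norm_of_nonneg ht]
    rw [hpa, norm_smul, Real.norm_of_nonneg ht, ← hpa] at hTa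
    rw [hpb, norm_smul, norm_neg, Real.norm_of_nonneg hs, ← hpb] at hTb
    calc _ ≤ s * (K * (t * ‖φ a - φ b‖) ^ 2) + t * (K * (s * ‖φ a - φ b‖) ^ 2) := by gcongr
      _ = (s + t) * (K * (s * t * ‖φ a - φ b‖ ^ 2)) := by ring
      _ = _ := by rw [hst, one_mul]
  have hfin := norm_add_lt_of_error (u := a - x) (v := b - x) (e := ψ p - (s • a + t • b))
    hr hA hAr hs ht hst (mem_ball_iff_norm.1 ha) (mem_ball_iff_norm.1 hb) (by
      rw [sub_sub_sub_cancel_right]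
      refine herr.trans ?_
      calc _ ≤ K * (s * t * (L ^ 2 * ‖a - b‖ ^ 2)) := by gcongr
        _ = _ := by ring)
  rw [mem_ball_iff_norm]
  have heq : ψ p - x = s • (a - x) + t • (b - x) + (ψ p - (s • a + t • b)) := by
    obtain rfl : t = 1 - s := by linarith
    module
  rwa [heq]
end

section
/- Let m ≥ 1 and let f be a holomorphic function on an open neighborhood U of 0 in ℂ^m with f(0) = 0 and with nonvanishing derivative at 0, i.e. Df(0) ≠ 0. Then there exists R > 0 such that the open ball B(0, R) is contained in U and, for every r with 0 < r ≤ R, the zero set {z ∈ ℂ^m : ‖z‖ < r and f(z) = 0} is contractible as a topological subspace of ℂ^m. -/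
/-!
Write `Df(0) = ⟪u, ·⟫` with `u ≠ 0` and put `F z = z + φ(z) • u`, where
`φ(z) = (f z - ⟪u, z⟫) / ‖u‖²`. Then `⟪u, F z⟫ = f z`, so `F` straightens the zero set of `f` to
the hyperplane `uᗮ`. A holomorphic `f` is strictly differentiable at `0` (Schwarz lemma applied to
the remainder `f - Df(0)`), hence `F` has strict derivative `id` at `0` and a local inverse `G`
whose strict derivative at `0` is `id` too.

The contraction of the zero set is `(t, z) ↦ G ((1 - t) • F z)`, and the point is that it does not
leave the ball of radius `r`, whatever `r ≤ R` is. In fact it decreases the norm: for `y ∈ uᗮ`,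
`G y - y` is a multiple of `u`, so that `‖G y‖² = ‖y‖² + ‖G y - y‖²`, and since `G - id` is
`1/2`-Lipschitz near `0`, for `0 ≤ s ≤ 1` the change of the second summand from `s • y` to `y` is
dominated by the gain `(1 - s²) ‖y‖²` in the first one.
-/

open Metric Set Filter Topology

/-- A holomorphic function on a neighbourhood of `0` is strictly differentiable at `0`: on a ball
of radius `3 * ρ` the remainder `h = f - Df(0)` is bounded by a small multiple of `ρ`, and the
Schwarz lemma on balls of radius `2 * ρ` turns this into a small Lipschitz constant of `h`. -/
theorem hasStrictFDerivAt_zero_of_holomorphic {E : Type*} [NormedAddCommGroup E] [NormedSpace ℂ E]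
    {U : Set E} (hU : IsOpen U) (h0 : (0 : E) ∈ U) {f : E → ℂ} (hf : DifferentiableOn ℂ f U)
    (hf0 : f 0 = 0) : HasStrictFDerivAt f (fderiv ℂ f 0) 0 := by
  set L := fderiv ℂ f 0 with hL
  have hd : HasFDerivAt f L 0 := (hf.differentiableAt (hU.mem_nhds h0)).hasFDerivAt
  rw [hasStrictFDerivAt_iff_isLittleO, Asymptotics.isLittleO_iff]
  intro c hc
  have hlo := hd.isLittleO
  rw [Asymptotics.isLittleO_iff] at hlo
  have hev := (hlo (c := c / 3) (by positivity)).and (hU.mem_nhds h0)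
  obtain ⟨ε, hε, hball⟩ := Metric.eventually_nhds_iff_ball.1 hev
  set ρ := ε / 3 with hρ
  have hρ0 : 0 < ρ := by positivity
  have hdh : DifferentiableOn ℂ (fun z => f z - L z) U := hf.sub L.differentiable.differentiableOn
  have hb : ∀ z : E, ‖z‖ < 3 * ρ → ‖f z - L z‖ ≤ c * ρ := by
    intro z hz
    have h := (hball z (by rw [mem_ball_zero_iff]; linarith)).1
    simp only [hf0, sub_zero] at h
    nlinarith
  have hn : ball ((0 : E), (0 : E)) ρ ∈ 𝓝 ((0 : E), (0 : E)) := ball_mem_nhds _ hρ0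
  filter_upwards [hn] with p hp
  obtain ⟨x, y⟩ := p
  rw [← ball_prod_same] at hp
  obtain ⟨hx, hy⟩ := hp
  simp only [mem_ball_zero_iff] at hx hy
  have hsub : ∀ w ∈ ball y (2 * ρ), ‖w‖ < 3 * ρ := by
    intro w hw
    rw [mem_ball_iff_norm] at hw
    have : ‖w‖ ≤ ‖w - y‖ + ‖y‖ := by simpa using norm_add_le (w - y) y
    linarith
  have key := Complex.dist_le_div_mul_dist_of_mapsTo_ball (f := fun z => f z - L z) (c := y)
    (z := x) (R₁ := 2 * ρ) (R₂ := 2 * (c * ρ))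
    (hdh.mono fun w hw => (hball w (by
      rw [mem_ball_zero_iff]; linarith [hsub w hw])).2)
    (fun w hw => by
      rw [mem_closedBall_iff_norm]
      have h1 := hb w (hsub w hw)
      have h2 := hb y (by linarith)
      have h3 := norm_sub_le (f w - L w) (f y - L y)
      linarith)
    (by
      rw [mem_ball_iff_norm]
      have := norm_sub_le x y
      linarith)
  have hq : 2 * (c * ρ) / (2 * ρ) = c := by field_simp
  rw [hq, dist_eq_norm, dist_eq_norm] at key
  convert key using 2
  simp only [map_sub]
  ring

/-- Norm comparison behind the contraction: orthogonally to `y`, a displacement that is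
`1/2`-Lipschitz along the segment from `0` to `y` cannot outweigh the shrinking of `y`. -/
theorem norm_smul_add_le_of_inner_eq_zero {E : Type*} [NormedAddCommGroup E]
    [InnerProductSpace ℂ E] {y a b : E} {s : ℝ} (hs0 : 0 ≤ s) (hs1 : s ≤ 1)
    (hya : inner ℂ y a = 0) (hyb : inner ℂ y b = 0) (ha : ‖a‖ ≤ 1 / 2 * ‖y‖)
    (hb : ‖b‖ ≤ 1 / 2 * (s * ‖y‖)) (hab : ‖b - a‖ ≤ 1 / 2 * ((1 - s) * ‖y‖)) :
    ‖(s : ℂ) • y + b‖ ≤ ‖y + a‖ := by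
  have h1 := norm_add_sq_eq_norm_sq_add_norm_sq_of_inner_eq_zero y a hya
  have h2 := norm_add_sq_eq_norm_sq_add_norm_sq_of_inner_eq_zero ((s : ℂ) • y) b
    (by rw [inner_smul_left, hyb, mul_zero])
  have hns : ‖(s : ℂ) • y‖ = s * ‖y‖ := by
    rw [norm_smul, Complex.norm_real, Real.norm_of_nonneg hs0]
  rw [hns] at h2
  have hd : ‖b‖ - ‖a‖ ≤ 1 / 2 * ((1 - s) * ‖y‖) := (norm_sub_norm_le b a).trans hab
  have hsum : ‖b‖ + ‖a‖ ≤ 1 / 2 * ((1 + s) * ‖y‖) := by linarith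
  have hprod : (‖b‖ - ‖a‖) * (‖b‖ + ‖a‖)
      ≤ (1 / 2 * ((1 - s) * ‖y‖)) * (1 / 2 * ((1 + s) * ‖y‖)) :=
    mul_le_mul hd hsum (by positivity)
      (mul_nonneg (by norm_num) (mul_nonneg (by linarith) (norm_nonneg _)))
  have hpos : 0 ≤ (1 - s) * (1 + s) * ‖y‖ ^ 2 :=
    mul_nonneg (mul_nonneg (by linarith) (by linarith)) (by positivity)
  refine le_of_sq_le_sq ?_ (norm_nonneg _)
  nlinarith

/-- If `f 0 = 0` and the strict derivative `⟪u, ·⟫` of `f` at `0` is nonzero, the zero set of `f`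
in every sufficiently small ball is contractible. -/
theorem contractible_zeros_of_hasStrictFDerivAt {E : Type*} [NormedAddCommGroup E]
    [InnerProductSpace ℂ E] [CompleteSpace E] {f : E → ℂ} {u : E} (hu : u ≠ 0)
    (hf : HasStrictFDerivAt f (innerSL ℂ u) 0) (hf0 : f 0 = 0) :
    ∃ R₀ : ℝ, 0 < R₀ ∧ ∀ r : ℝ, 0 < r → r ≤ R₀ →
      ContractibleSpace {z : E // ‖z‖ < r ∧ f z = 0} := by
  have huu : (inner ℂ u u : ℂ) ≠ 0 := inner_self_ne_zero.2 hu
  set φ : E → ℂ := fun z => (inner ℂ u u)⁻¹ * (f z - inner ℂ u z) with hφ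
  set F : E → E := fun z => z + φ z • u with hFdef
  have hFin : ∀ z, inner ℂ u (F z) = f z := by
    intro z
    simp only [hFdef, hφ, inner_add_right, inner_smul_right]
    field_simp
    ring
  have hF0 : F 0 = 0 := by simp [hFdef, hφ, hf0]
  have hF : HasStrictFDerivAt F ((ContinuousLinearEquiv.refl ℂ E : E ≃L[ℂ] E) : E →L[ℂ] E) 0 := by
    have h1 : HasStrictFDerivAt φ (0 : E →L[ℂ] ℂ) 0 := by
      have := (hf.sub (innerSL ℂ u).hasStrictFDerivAt).const_mul (inner ℂ u u : ℂ)⁻¹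
      rwa [sub_self, smul_zero] at this
    have h2 := (hasStrictFDerivAt_id (𝕜 := ℂ) (0 : E)).add (h1.smul_const u)
    refine h2.congr_fderiv ?_
    ext z
    simp
  set e := hF.toOpenPartialHomeomorph F with he
  have hecoe : ∀ z, e z = F z := fun z => rfl
  have h0s : (0 : E) ∈ e.source := hF.mem_toOpenPartialHomeomorph_source
  have h0t : (0 : E) ∈ e.target := by
    have := e.map_source h0s
    rwa [hecoe, hF0] at this
  have hG0 : e.symm 0 = 0 := by
    have := e.left_inv h0s
    rwa [hecoe, hF0] at this
  have hG : HasStrictFDerivAt e.symm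
      ((ContinuousLinearEquiv.refl ℂ E : E ≃L[ℂ] E) : E →L[ℂ] E) 0 := by
    have := hF.to_localInverse
    rw [hF0] at this
    exact this
  obtain ⟨s, hs, hsG⟩ := hG.approximates_deriv_on_nhds (c := 1 / 2) (Or.inr (by norm_num))
  obtain ⟨δ, hδ, hδsub⟩ := Metric.mem_nhds_iff.1
    (inter_mem hs (e.open_target.mem_nhds h0t))
  have hlip : ∀ y ∈ ball (0 : E) δ, ∀ y' ∈ ball (0 : E) δ,
      ‖(e.symm y - y) - (e.symm y' - y')‖ ≤ 1 / 2 * ‖y - y'‖ := by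
    intro y hy y' hy'
    have := hsG y (hδsub hy).1 y' (hδsub hy').1
    simp only [ContinuousLinearEquiv.coe_refl, ContinuousLinearMap.id_apply] at this
    convert this using 2
    · abel
    · norm_num
  have hFc : ContinuousAt F 0 := hF.continuousAt
  have hev : ∀ᶠ z in 𝓝 (0 : E), z ∈ e.source ∧ F z ∈ ball (0 : E) δ :=
    Filter.Eventually.and (e.open_source.mem_nhds h0s)
      (hFc.eventually (by rw [hF0]; exact ball_mem_nhds _ hδ))
  obtain ⟨R, hR, hRsub⟩ := Metric.eventually_nhds_iff_ball.1 hev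
  refine ⟨R, hR, fun r hr hrR => ?_⟩
  rw [contractible_iff_id_nullhomotopic]
  have hz : ∀ z : {z : E // ‖z‖ < r ∧ f z = 0}, z.1 ∈ e.source ∧ F z.1 ∈ ball (0 : E) δ :=
    fun z => hRsub z.1 (mem_ball_zero_iff.2 (z.2.1.trans_le hrR))
  have hball : ∀ (t : unitInterval) (z : {z : E // ‖z‖ < r ∧ f z = 0}),
      ((1 - (t : ℝ) : ℝ) : ℂ) • F z.1 ∈ ball (0 : E) δ := by
    intro t z
    have h := (hz z).2
    rw [mem_ball_zero_iff] at h ⊢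
    rw [norm_smul, Complex.norm_real, Real.norm_of_nonneg (by linarith [t.2.2])]
    nlinarith [t.2.1, norm_nonneg (F z.1)]
  -- `e.symm y - y` is a multiple of `u`, hence orthogonal to `y` when `y ∈ uᗮ`.
  have horth : ∀ w ∈ ball (0 : E) δ, ∀ y : E, inner ℂ u y = 0 →
      inner ℂ y (e.symm w - w) = 0 := by
    intro w hw y hy
    have h1 : F (e.symm w) = w := e.right_inv (hδsub hw).2
    have h2 : e.symm w - w = -(φ (e.symm w) • u) := by
      nth_rewrite 2 [← h1]
      simp [hFdef]
    rw [h2, inner_neg_right, inner_smul_right, inner_eq_zero_symm.1 hy, mul_zero, neg_zero]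
  have hmem : ∀ (t : unitInterval) (z : {z : E // ‖z‖ < r ∧ f z = 0}),
      ‖e.symm (((1 - (t : ℝ) : ℝ) : ℂ) • F z.1)‖ < r ∧
        f (e.symm (((1 - (t : ℝ) : ℝ) : ℂ) • F z.1)) = 0 := by
    intro t z
    have hin : inner ℂ u (F z.1) = 0 := (hFin z.1).trans z.2.2
    constructor
    · refine lt_of_le_of_lt ?_ z.2.1
      set y := F z.1 with hy
      set σ : ℝ := 1 - (t : ℝ) with hσ
      have hσ0 : 0 ≤ σ := by linarith [t.2.2]
      have hσ1 : σ ≤ 1 := by linarith [t.2.1]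
      have hyb : y ∈ ball (0 : E) δ := (hz z).2
      have hsyb : (σ : ℂ) • y ∈ ball (0 : E) δ := hball t z
      have h0b : (0 : E) ∈ ball (0 : E) δ := mem_ball_self hδ
      have hGy : e.symm y = z.1 := e.left_inv (hz z).1
      have hns : ∀ x : ℝ, 0 ≤ x → ‖(x : ℂ) • y‖ = x * ‖y‖ := fun x hx => by
        rw [norm_smul, Complex.norm_real, Real.norm_of_nonneg hx]
      have ha := hlip y hyb 0 h0b
      have hb := hlip _ hsyb 0 h0b
      have hab := hlip _ hsyb y hyb
      rw [hG0, sub_zero, sub_zero, sub_zero] at ha hb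
      rw [hns σ hσ0] at hb
      have hdiff : ‖(σ : ℂ) • y - y‖ = (1 - σ) * ‖y‖ := by
        rw [norm_sub_rev, ← hns (1 - σ) (by linarith)]
        congr 1
        push_cast
        rw [sub_smul, one_smul]
      rw [hdiff] at hab
      have := norm_smul_add_le_of_inner_eq_zero hσ0 hσ1 (horth y hyb y hin)
        (horth _ hsyb y hin) ha hb hab
      simpa [hGy] using this
    · have h1 : F (e.symm (((1 - (t : ℝ) : ℝ) : ℂ) • F z.1)) = ((1 - (t : ℝ) : ℝ) : ℂ) • F z.1 :=
        e.right_inv (hδsub (hball t z)).2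
      rw [← hFin, h1, inner_smul_right, hin, mul_zero]
  refine ⟨⟨0, by simpa using hr, hf0⟩, ⟨⟨⟨fun p => ⟨_, hmem p.1 p.2⟩, ?_⟩, ?_, ?_⟩⟩⟩
  · refine Continuous.subtype_mk ?_ _
    refine e.symm.continuousOn.comp_continuous ?_ fun p => (hδsub (hball p.1 p.2)).2
    have hFcont : Continuous fun p : unitInterval × {z : E // ‖z‖ < r ∧ f z = 0} => F p.2.1 :=
      e.continuousOn.comp_continuous (by fun_prop) fun p => (hz p.2).1
    refine Continuous.smul ?_ hFcont
    exact Complex.continuous_ofReal.comp (by fun_prop)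
  · intro z
    apply Subtype.ext
    have h : e.symm (F z.1) = z.1 := e.left_inv (hz z).1
    simpa using h
  · intro z
    apply Subtype.ext
    simpa using hG0


/-- If `f` is holomorphic on an open neighborhood `U` of `0` in `ℂ^m`
with `f 0 = 0` and `Df(0) ≠ 0`, then there is `R > 0` with `B(0,R) ⊆ U` such that for
every `0 < r ≤ R` the zero set `{z : ‖z‖ < r ∧ f z = 0}` is contractible. -/
theorem stmt3 (m : ℕ) (hm : 1 ≤ m)
    (U : Set (EuclideanSpace ℂ (Fin m))) (hU : IsOpen U)
    (h0 : (0 : EuclideanSpace ℂ (Fin m)) ∈ U)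
    (f : EuclideanSpace ℂ (Fin m) → ℂ)
    (hf : DifferentiableOn ℂ f U)
    (hf0 : f 0 = 0)
    (hdf : fderiv ℂ f 0 ≠ 0) :
    ∃ R : ℝ, 0 < R ∧ Metric.ball (0 : EuclideanSpace ℂ (Fin m)) R ⊆ U ∧
      ∀ r : ℝ, 0 < r → r ≤ R →
        ContractibleSpace {z : EuclideanSpace ℂ (Fin m) // ‖z‖ < r ∧ f z = 0} := by
  set u := (InnerProductSpace.toDual ℂ (EuclideanSpace ℂ (Fin m))).symm (fderiv ℂ f 0) with hu
  have huL : innerSL ℂ u = fderiv ℂ f 0 := by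
    ext1 z
    simp [hu]
  have hu0 : u ≠ 0 := by
    intro h
    rw [h, map_zero] at huL
    exact hdf huL.symm
  obtain ⟨R₀, hR₀, hcontr⟩ := contractible_zeros_of_hasStrictFDerivAt hu0
    (huL ▸ hasStrictFDerivAt_zero_of_holomorphic hU h0 hf hf0) hf0
  obtain ⟨ε, hε, hεU⟩ := Metric.isOpen_iff.1 hU 0 h0
  exact ⟨min R₀ ε, lt_min hR₀ hε, (ball_subset_ball (min_le_right _ _)).trans hεU,
    fun r hr hrR => hcontr r hr (hrR.trans (min_le_left _ _))⟩
end
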